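/- Let B be the Steiner triple system on Z_19 obtained by developing the base blocks {0,1,6}, {0,2,10}, {0,3,7} modulo 19. For every point x ∈ Z_19 there exists an almost parallel class of this system (six pairwise disjoint blocks covering all points except one) that does not contain x; in particular, each translate of the almost parallel class {1,3,11}, {2,15,16}, {4,17,18}, {5,8,12}, {6,9,13}, {7,10,14} is again an almost parallel class. -/

import Mathlib

/-- `B` is (the block set of) a partial Steiner triple system on the point set `X`:
every block has 3 points and every pair of distinct points lies in at most one block. -/
def isPSTS {X : Type*} [DecidableEq X] (B : Finset (Finset X)) : Prop :=
  (∀ b ∈ B, b.card = 3) ∧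
  ∀ p q : X, p ≠ q → (B.filter (fun b => p ∈ b ∧ q ∈ b)).card ≤ 1

/-- `B` is (the block set of) a Steiner triple system on the point set `X`:
every block has 3 points and every pair of distinct points lies in exactly one block. -/
def isSTS {X : Type*} [DecidableEq X] (B : Finset (Finset X)) : Prop :=
  (∀ b ∈ B, b.card = 3) ∧
  ∀ p q : X, p ≠ q → (B.filter (fun b => p ∈ b ∧ q ∈ b)).card = 1

/-- The finset `S` can be partitioned into blocks of `B`. -/
def blocksPartition {X : Type*} [DecidableEq X] (B : Finset (Finset X)) (S : Finset X) : Prop :=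
  ∃ P : Finset (Finset X), P ⊆ B ∧
    (∀ b₁ ∈ P, ∀ b₂ ∈ P, b₁ ≠ b₂ → Disjoint b₁ b₂) ∧ P.biUnion id = S

/-- `A` is an almost parallel class of `B`: a set of pairwise disjoint blocks
covering all points of `X` except exactly one. -/
def isAPC {X : Type*} [DecidableEq X] [Fintype X] (B A : Finset (Finset X)) : Prop :=
  A ⊆ B ∧ (∀ b₁ ∈ A, ∀ b₂ ∈ A, b₁ ≠ b₂ → Disjoint b₁ b₂) ∧
    ∃ y : X, A.biUnion id = Finset.univ.erase y

/-- `B` is sequenceable: there is a sequencing of the points (a bijection from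
`Fin n` to `X`) such that no proper segment can be partitioned into blocks of `B`. -/
def sequenceable {X : Type*} [DecidableEq X] [Fintype X] (B : Finset (Finset X)) : Prop :=
  ∃ f : Fin (Fintype.card X) ≃ X,
    ∀ i j : Fin (Fintype.card X), i ≤ j →
      ¬((i : ℕ) = 0 ∧ (j : ℕ) = Fintype.card X - 1) →
      ¬ blocksPartition B ((Finset.Icc i j).image f)

/-- The blocks obtained by developing the base blocks modulo 19. -/
def dev19 : Finset (Finset (ZMod 19)) :=
  Finset.univ.biUnion fun t : ZMod 19 =>
    ({{0,1,6}, {0,2,10}, {0,3,7}} : Finset (Finset (ZMod 19))).image (fun b => b.image (· + t))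

/-- The almost parallel class `{1,3,11}, {2,15,16}, {4,17,18}, {5,8,12}, {6,9,13}, {7,10,14}`. -/
def apc19 : Finset (Finset (ZMod 19)) :=
  {({1,3,11} : Finset (ZMod 19)), {2,15,16}, {4,17,18}, {5,8,12}, {6,9,13}, {7,10,14}}

theorem apc19_mem : ∀ b ∈ apc19, ∃ s : ZMod 19,
    ∃ c ∈ ({{0,1,6}, {0,2,10}, {0,3,7}} : Finset (Finset (ZMod 19))), c.image (· + s) = b := by
  intro b hb
  simp only [apc19, Finset.mem_insert, Finset.mem_singleton] at hb
  rcases hb with rfl | rfl | rfl | rfl | rfl | rfl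
  · exact ⟨1, {0,2,10}, by simp, by decide⟩
  · exact ⟨15, {0,1,6}, by simp, by decide⟩
  · exact ⟨17, {0,1,6}, by simp, by decide⟩
  · exact ⟨5, {0,3,7}, by simp, by decide⟩
  · exact ⟨6, {0,3,7}, by simp, by decide⟩
  · exact ⟨7, {0,3,7}, by simp, by decide⟩

theorem apc19_disj : ∀ b₁ ∈ apc19, ∀ b₂ ∈ apc19, b₁ ≠ b₂ → Disjoint b₁ b₂ := by
  intro b₁ h₁ b₂ h₂ hne
  simp only [apc19, Finset.mem_insert, Finset.mem_singleton] at h₁ h₂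
  rcases h₁ with rfl | rfl | rfl | rfl | rfl | rfl <;>
    rcases h₂ with rfl | rfl | rfl | rfl | rfl | rfl <;>
    first
      | exact absurd rfl hne
      | (rw [Finset.disjoint_iff_inter_eq_empty]; decide)

theorem apc19_cover : apc19.biUnion id = Finset.univ.erase 0 := by
  decide +kernel

theorem apc19_translate_cover (t : ZMod 19) :
    (apc19.image (fun b => b.image (· + t))).biUnion id = Finset.univ.erase t := by
  have h : (apc19.image (fun b => b.image (· + t))).biUnion id
      = (apc19.biUnion id).image (· + t) := by
    rw [Finset.image_biUnion, Finset.biUnion_image]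
    rfl
  rw [h, apc19_cover]
  ext z
  simp only [Finset.mem_image, Finset.mem_erase, Finset.mem_univ, and_true]
  constructor
  · rintro ⟨a, ha, rfl⟩ h0
    exact ha (by simpa using h0)
  · intro hz
    exact ⟨z - t, sub_ne_zero.mpr hz, by ring⟩

theorem apc19_translate (t : ZMod 19) :
    isAPC dev19 (apc19.image (fun b => b.image (· + t))) := by
  refine ⟨?_, ?_, t, apc19_translate_cover t⟩
  · intro b hb
    obtain ⟨a, ha, rfl⟩ := Finset.mem_image.mp hb
    obtain ⟨s, c, hc, rfl⟩ := apc19_mem a ha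
    refine Finset.mem_biUnion.mpr ⟨s + t, Finset.mem_univ _, Finset.mem_image.mpr ⟨c, hc, ?_⟩⟩
    simp only [Finset.image_image]
    congr 1
    funext x
    simp [add_assoc]
  · intro b₁ h₁ b₂ h₂ hne
    obtain ⟨a₁, ha₁, rfl⟩ := Finset.mem_image.mp h₁
    obtain ⟨a₂, ha₂, rfl⟩ := Finset.mem_image.mp h₂
    have : a₁ ≠ a₂ := fun h => hne (by rw [h])
    exact (Finset.disjoint_image (add_left_injective t)).mpr (apc19_disj a₁ ha₁ a₂ ha₂ this)

theorem stmt5 :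
    (∀ t : ZMod 19, isAPC dev19 (apc19.image (fun b => b.image (· + t)))) ∧
    (∀ x : ZMod 19, ∃ A : Finset (Finset (ZMod 19)),
      isAPC dev19 A ∧ x ∉ A.biUnion id) := by
  refine ⟨apc19_translate, fun x => ⟨_, apc19_translate x, ?_⟩⟩
  rw [apc19_translate_cover]
  simp
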